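/- arXiv:2001.09317 — 3 statements merged into one kernel-verified Lean document; each statement's English description precedes it below -/
import Mathlib

section
/- (Lemma 4 of the paper, swap lemma.) With μ_I and μ_II the Case I and Case II schedules built from integers k ≥ 0, k1 ≥ 0, k2 ≥ 1 and a common schedule ν, and T = k + k1 + k2 + 1, we have ∑_{t=1}^{T} A_{μ_I}(t) ≤ ∑_{t=1}^{T} A_{μ_II}(t). -/
/-- The expected Age-of-Information at time-slot `t` under a per-slot
success-probability function `μ : ℤ → ℝ`: the series
`A_μ(t) = ∑_{τ=0}^∞ ∏_{i=0}^{τ-1} (1 − μ(t−i))`, where the `τ = 0` term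
(the empty product) equals 1. -/
noncomputable def aoi (μ : ℤ → ℝ) (t : ℤ) : ℝ :=
  ∑' τ : ℕ, ∏ i ∈ Finset.range τ, (1 - μ (t - (i : ℤ)))

/-- Case I schedule: `ν(s)` for `s ≤ k`; `μ*` in slot `k+1`; the worst channel
`μ_min` in slots `k+2` to `k+k2+1`; the optimal channel `μ*` thereafter
(in particular in slots `k+k2+2` to `T = k+k1+k2+1`). -/
noncomputable def caseI (μmin μstar : ℝ) (ν : ℤ → ℝ) (k k2 : ℕ) : ℤ → ℝ :=
  fun s =>
    if s ≤ (k : ℤ) then ν s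
    else if s = (k : ℤ) + 1 then μstar
    else if s ≤ (k : ℤ) + (k2 : ℤ) + 1 then μmin
    else μstar

/-- Case II schedule: `ν(s)` for `s ≤ k`; the worst channel `μ_min` in slots
`k+1` to `k+k2`; the optimal channel `μ*` thereafter
(in particular in slots `k+k2+1` to `T = k+k1+k2+1`). -/
noncomputable def caseII (μmin μstar : ℝ) (ν : ℤ → ℝ) (k k2 : ℕ) : ℤ → ℝ :=
  fun s =>
    if s ≤ (k : ℤ) then ν s
    else if s ≤ (k : ℤ) + (k2 : ℤ) then μmin
    else μstar

/-!
In a slot with failure probability `q` the age `x` becomes `f_q(x) = 1 + q x`. Two such affine maps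
commute up to a constant, `f_b ∘ f_a = f_a ∘ f_b + (b - a)`, so moving one good slot (`b = 1 - μ*`)
past `n` bad slots (`a = 1 - μ_min`) changes each later age by an amount independent of the starting
age `x`. Summed over the `n + 1` permuted slots and `m` good slots after them, the age changes by
exactly `(a - b) (∑_{i<n} a^i) (x - ∑_{r≤m} b^r)`. The last factor is nonnegative because every term
of the series defining `x` dominates the corresponding power of the best failure probability `b`.
-/

section AffineDynamics

variable {R : Type*} [CommRing R]

/-- One-slot evolution of the expected age: from age `x`, a slot with failure probability `q` leads
to age `1 + q * x`. -/
def ageStep (q x : R) : R := 1 + q * x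

/-- Total age over `n` consecutive slots of failure probability `q` that follow a slot of age `x`.
The starting slot is not counted. -/
def blockAge (q : R) (n : ℕ) (x : R) : R := ∑ j ∈ Finset.range n, (ageStep q)^[j + 1] x

theorem ageStep_iterate (q x : R) (n : ℕ) :
    (ageStep q)^[n] x = ∑ i ∈ Finset.range n, q ^ i + q ^ n * x := by
  induction n with
  | zero => simp
  | succ n ih =>
    rw [Function.iterate_succ_apply', ih, geom_sum_succ, pow_succ', ageStep]
    ring

theorem ageStep_iterate_sub (q x y : R) (n : ℕ) :
    (ageStep q)^[n] x - (ageStep q)^[n] y = q ^ n * (x - y) := by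
  rw [ageStep_iterate, ageStep_iterate]
  ring

theorem ageStep_iterate_sub_self (q x : R) (n : ℕ) :
    (ageStep q)^[n] x - x = (∑ i ∈ Finset.range n, q ^ i) * (ageStep q x - x) := by
  rw [ageStep_iterate, ageStep]
  linear_combination -x * geom_sum_mul q n

theorem ageStep_iterate_commutator (a b x : R) (n : ℕ) :
    ageStep b ((ageStep a)^[n] x) - (ageStep a)^[n] (ageStep b x) =
      (b - a) * ∑ i ∈ Finset.range n, a ^ i := by
  rw [ageStep_iterate, ageStep_iterate, ageStep, ageStep]
  linear_combination geom_sum_mul a n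

theorem blockAge_one (q x : R) : blockAge q 1 x = ageStep q x := by
  simp [blockAge]

theorem blockAge_succ (q : R) (n : ℕ) (x : R) :
    blockAge q (n + 1) x = blockAge q n x + (ageStep q)^[n + 1] x :=
  Finset.sum_range_succ _ n

theorem blockAge_succ' (q : R) (n : ℕ) (x : R) :
    blockAge q (n + 1) x = ageStep q x + blockAge q n (ageStep q x) :=
  (Finset.sum_range_succ' _ n).trans (add_comm _ _)

theorem blockAge_sub (q x y : R) (n : ℕ) :
    blockAge q n x - blockAge q n y = q * (∑ i ∈ Finset.range n, q ^ i) * (x - y) := by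
  simp only [blockAge, ← Finset.sum_sub_distrib, ageStep_iterate_sub, Finset.mul_sum,
    Finset.sum_mul, pow_succ']

theorem blockAge_swap (a b x : R) (n m : ℕ) :
    (blockAge a n x + blockAge b (m + 1) ((ageStep a)^[n] x)) -
        (blockAge b 1 x + blockAge a n (ageStep b x) +
          blockAge b m ((ageStep a)^[n] (ageStep b x))) =
      (a - b) * (∑ i ∈ Finset.range n, a ^ i) * (x - ∑ r ∈ Finset.range (m + 1), b ^ r) := by
  set y := (ageStep a)^[n] x
  have rise : y - x = (∑ i ∈ Finset.range n, a ^ i) * (ageStep a x - x) :=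
    ageStep_iterate_sub_self a x n
  have bad_block := blockAge_sub a x (ageStep b x) n
  have tail := blockAge_sub b (ageStep b y) ((ageStep a)^[n] (ageStep b x)) m
  rw [ageStep_iterate_commutator] at tail
  rw [blockAge_succ', blockAge_one, geom_sum_succ]
  simp only [ageStep] at rise bad_block tail ⊢
  linear_combination bad_block + tail + b * rise

end AffineDynamics

section AgeRecursion

variable {μ μ' : ℤ → ℝ} {t : ℤ} {c : ℝ} {n : ℕ}

/-- Probability that all of the `τ` most recent transmissions, in slots `t, t - 1, …, t - τ + 1`,
fail: the general term of the series `aoi μ t`. -/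
def failProb (μ : ℤ → ℝ) (t : ℤ) (τ : ℕ) : ℝ := ∏ i ∈ Finset.range τ, (1 - μ (t - (i : ℤ)))

theorem failProb_congr (h : ∀ s ≤ t, μ s = μ' s) : failProb μ t = failProb μ' t := by
  funext τ
  exact Finset.prod_congr rfl fun i _ => by rw [h (t - i) (by lia)]

theorem aoi_congr (h : ∀ s ≤ t, μ s = μ' s) : aoi μ t = aoi μ' t :=
  congrArg tsum (failProb_congr h)

theorem failProb_nonneg (h : ∀ s ≤ t, μ s ≤ 1) (τ : ℕ) : 0 ≤ failProb μ t τ :=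
  Finset.prod_nonneg fun i _ => sub_nonneg.2 (h _ (by lia))

theorem failProb_le_pow (h : ∀ s ≤ t, c ≤ μ s ∧ μ s ≤ 1) (τ : ℕ) :
    failProb μ t τ ≤ (1 - c) ^ τ :=
  calc
    failProb μ t τ ≤ ∏ _i ∈ Finset.range τ, (1 - c) :=
        Finset.prod_le_prod (fun i _ => sub_nonneg.2 (h _ (by lia)).2)
          fun i _ => sub_le_sub_left (h _ (by lia)).1 1
    _ = (1 - c) ^ τ := by rw [Finset.prod_const, Finset.card_range]

theorem pow_le_failProb (hc : c ≤ 1) (h : ∀ s ≤ t, μ s ≤ c) (τ : ℕ) :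
    (1 - c) ^ τ ≤ failProb μ t τ :=
  calc
    (1 - c) ^ τ = ∏ _i ∈ Finset.range τ, (1 - c) := by
        rw [Finset.prod_const, Finset.card_range]
    _ ≤ failProb μ t τ :=
        Finset.prod_le_prod (fun _ _ => sub_nonneg.2 hc) fun i _ => sub_le_sub_left (h _ (by lia)) 1

theorem summable_failProb (hc : 0 < c) (h : ∀ s ≤ t, c ≤ μ s ∧ μ s ≤ 1) :
    Summable (failProb μ t) := by
  have hc1 : c ≤ 1 := (h t le_rfl).1.trans (h t le_rfl).2
  exact Summable.of_nonneg_of_le (failProb_nonneg fun s hs => (h s hs).2) (failProb_le_pow h)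
    (summable_geometric_of_lt_one (by linarith) (by linarith))

theorem geom_sum_le_aoi (hc : c ≤ 1) (h : ∀ s ≤ t, μ s ≤ c) (hsum : Summable (failProb μ t))
    (n : ℕ) : ∑ r ∈ Finset.range n, (1 - c) ^ r ≤ aoi μ t :=
  (Finset.sum_le_sum fun r _ => pow_le_failProb hc h r).trans <|
    hsum.sum_le_tsum _ fun τ _ => failProb_nonneg (fun s hs => (h s hs).trans hc) τ

theorem failProb_add_one_succ (μ : ℤ → ℝ) (t : ℤ) (τ : ℕ) :
    failProb μ (t + 1) (τ + 1) = (1 - μ (t + 1)) * failProb μ t τ := by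
  simp only [failProb, Finset.prod_range_succ', Nat.cast_add, Nat.cast_one, Nat.cast_zero,
    sub_zero, add_sub_add_right_eq_sub]
  exact mul_comm _ _

theorem summable_failProb_add_one (h : Summable (failProb μ t)) :
    Summable (failProb μ (t + 1)) := by
  rw [← summable_nat_add_iff 1]
  simpa only [failProb_add_one_succ] using h.mul_left (1 - μ (t + 1))

theorem summable_failProb_add_natCast (h : Summable (failProb μ t)) (n : ℕ) :
    Summable (failProb μ (t + n)) := by
  induction n with
  | zero => simpa using h
  | succ n ih => simpa only [Nat.cast_succ, add_assoc] using summable_failProb_add_one ih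

theorem aoi_add_one (h : Summable (failProb μ t)) :
    aoi μ (t + 1) = ageStep (1 - μ (t + 1)) (aoi μ t) := by
  have empty_product : failProb μ (t + 1) 0 = 1 := Finset.prod_range_zero _
  calc
    aoi μ (t + 1) = failProb μ (t + 1) 0 + ∑' τ, failProb μ (t + 1) (τ + 1) :=
        (summable_failProb_add_one h).tsum_eq_zero_add
    _ = 1 + ∑' τ, (1 - μ (t + 1)) * failProb μ t τ := by
        simp only [empty_product, failProb_add_one_succ]
    _ = ageStep (1 - μ (t + 1)) (aoi μ t) := by rw [tsum_mul_left]; rfl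

theorem aoi_add_natCast_of_const (hsum : Summable (failProb μ t))
    (hμ : ∀ s, t < s → s ≤ t + n → μ s = c) :
    aoi μ (t + n) = (ageStep (1 - c))^[n] (aoi μ t) := by
  induction n with
  | zero => simp
  | succ n ih =>
    have hslot : μ (t + n + 1) = c := hμ _ (by lia) (by lia)
    rw [Nat.cast_succ, ← add_assoc, aoi_add_one (summable_failProb_add_natCast hsum n), hslot,
      ih fun s hs hsn => hμ s hs (by lia), Function.iterate_succ_apply']

theorem sum_Ioc_aoi_of_const (hsum : Summable (failProb μ t))
    (hμ : ∀ s, t < s → s ≤ t + n → μ s = c) :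
    ∑ s ∈ Finset.Ioc t (t + n), aoi μ s = blockAge (1 - c) n (aoi μ t) := by
  induction n with
  | zero => simp [blockAge]
  | succ n ih =>
    rw [blockAge_succ, ← aoi_add_natCast_of_const hsum hμ,
      ← ih fun s hs hsn => hμ s hs (by lia), Nat.cast_succ, ← add_assoc,
      ← Finset.insert_Ioc_right_eq_Ioc_add_one (by lia : t ≤ t + n),
      Finset.sum_insert (by simp), add_comm]

end AgeRecursion

theorem sum_Ioc_add_sum_Ioc {α M : Type*} [LinearOrder α] [LocallyFiniteOrder α]
    [AddCommMonoid M] (f : α → M) {a b c : α} (hab : a ≤ b) (hbc : b ≤ c) :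
    ∑ s ∈ Finset.Ioc a b, f s + ∑ s ∈ Finset.Ioc b c, f s = ∑ s ∈ Finset.Ioc a c, f s := by
  rw [← Finset.Ioc_union_Ioc_eq_Ioc hab hbc,
    Finset.sum_union (Finset.Ioc_disjoint_Ioc_of_le le_rfl)]

section SwapLemma

variable {μmin μstar : ℝ} {ν : ℤ → ℝ} {k k1 k2 : ℕ}

theorem caseI_of_le {s : ℤ} (hs : s ≤ k) : caseI μmin μstar ν k k2 s = ν s :=
  if_pos hs

theorem caseII_of_le {s : ℤ} (hs : s ≤ k) : caseII μmin μstar ν k k2 s = ν s :=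
  if_pos hs

theorem sum_Ioc_aoi_caseI (hsum : Summable (failProb ν k)) :
    ∑ t ∈ Finset.Ioc (k : ℤ) (k + k1 + k2 + 1), aoi (caseI μmin μstar ν k k2) t =
      blockAge (1 - μstar) 1 (aoi ν k) +
        blockAge (1 - μmin) k2 (ageStep (1 - μstar) (aoi ν k)) +
        blockAge (1 - μstar) k1 ((ageStep (1 - μmin))^[k2] (ageStep (1 - μstar) (aoi ν k))) := by
  set μ := caseI μmin μstar ν k k2
  have past : ∀ s ≤ (k : ℤ), μ s = ν s := fun _ => caseI_of_le
  have good : ∀ s, (k : ℤ) < s → s ≤ k + (1 : ℕ) → μ s = μstar := by grind [caseI]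
  have bad : ∀ s, (k + (1 : ℕ) : ℤ) < s → s ≤ k + (1 : ℕ) + k2 → μ s = μmin := by grind [caseI]
  have last : ∀ s, (k + (1 : ℕ) + k2 : ℤ) < s → s ≤ k + (1 : ℕ) + k2 + k1 → μ s = μstar := by
    grind [caseI]
  have hsum₀ : Summable (failProb μ k) := failProb_congr past ▸ hsum
  have hsum₁ := summable_failProb_add_natCast hsum₀ 1
  have hsum₂ := summable_failProb_add_natCast hsum₁ k2
  have horizon : (k + k1 + k2 + 1 : ℤ) = k + (1 : ℕ) + k2 + k1 := by push_cast; ring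
  rw [horizon, ← sum_Ioc_add_sum_Ioc _ (by lia : (k : ℤ) ≤ k + (1 : ℕ) + k2) (by lia),
    ← sum_Ioc_add_sum_Ioc _ (by lia : (k : ℤ) ≤ k + (1 : ℕ)) (by lia),
    sum_Ioc_aoi_of_const hsum₀ good, sum_Ioc_aoi_of_const hsum₁ bad,
    sum_Ioc_aoi_of_const hsum₂ last, aoi_add_natCast_of_const hsum₁ bad,
    aoi_add_natCast_of_const hsum₀ good, aoi_congr past, Function.iterate_one]

theorem sum_Ioc_aoi_caseII (hsum : Summable (failProb ν k)) :
    ∑ t ∈ Finset.Ioc (k : ℤ) (k + k1 + k2 + 1), aoi (caseII μmin μstar ν k k2) t =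
      blockAge (1 - μmin) k2 (aoi ν k) +
        blockAge (1 - μstar) (k1 + 1) ((ageStep (1 - μmin))^[k2] (aoi ν k)) := by
  set μ := caseII μmin μstar ν k k2
  have past : ∀ s ≤ (k : ℤ), μ s = ν s := fun _ => caseII_of_le
  have bad : ∀ s, (k : ℤ) < s → s ≤ k + k2 → μ s = μmin := by grind [caseII]
  have last : ∀ s, (k + k2 : ℤ) < s → s ≤ k + k2 + (k1 + 1 : ℕ) → μ s = μstar := by
    grind [caseII]
  have hsum₀ : Summable (failProb μ k) := failProb_congr past ▸ hsum
  have hsum₁ := summable_failProb_add_natCast hsum₀ k2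
  have horizon : (k + k1 + k2 + 1 : ℤ) = k + k2 + (k1 + 1 : ℕ) := by push_cast; ring
  rw [horizon, ← sum_Ioc_add_sum_Ioc _ (by lia : (k : ℤ) ≤ k + k2) (by lia),
    sum_Ioc_aoi_of_const hsum₀ bad, sum_Ioc_aoi_of_const hsum₁ last,
    aoi_add_natCast_of_const hsum₀ bad, aoi_congr past]

theorem sum_aoi_caseII_sub_sum_aoi_caseI (hsum : Summable (failProb ν k)) :
    ∑ t ∈ Finset.Icc (1 : ℤ) (k + k1 + k2 + 1), aoi (caseII μmin μstar ν k k2) t -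
        ∑ t ∈ Finset.Icc (1 : ℤ) (k + k1 + k2 + 1), aoi (caseI μmin μstar ν k k2) t =
      (μstar - μmin) * (∑ i ∈ Finset.range k2, (1 - μmin) ^ i) *
        (aoi ν k - ∑ r ∈ Finset.range (k1 + 1), (1 - μstar) ^ r) := by
  have common_past : ∑ t ∈ Finset.Ioc (0 : ℤ) k, aoi (caseII μmin μstar ν k k2) t =
      ∑ t ∈ Finset.Ioc (0 : ℤ) k, aoi (caseI μmin μstar ν k k2) t := by
    refine Finset.sum_congr rfl fun t ht => aoi_congr fun s hs => ?_
    have hsk : s ≤ k := hs.trans (Finset.mem_Ioc.1 ht).2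
    rw [caseI_of_le hsk, caseII_of_le hsk]
  have split_at_k : ∀ f : ℤ → ℝ, ∑ t ∈ Finset.Icc (1 : ℤ) (k + k1 + k2 + 1), f t =
      ∑ t ∈ Finset.Ioc (0 : ℤ) k, f t + ∑ t ∈ Finset.Ioc (k : ℤ) (k + k1 + k2 + 1), f t := by
    intro f
    rw [sum_Ioc_add_sum_Ioc f (by lia) (by lia), ← Finset.Icc_add_one_left_eq_Ioc, zero_add]
  rw [split_at_k, split_at_k, common_past, add_sub_add_left_eq_sub, sum_Ioc_aoi_caseI hsum,
    sum_Ioc_aoi_caseII hsum, blockAge_swap, sub_sub_sub_cancel_left]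

end SwapLemma

theorem stmt_4_general (μmin μstar : ℝ) (hμ_le : μmin ≤ μstar) (hμstar_le : μstar ≤ 1)
    (k k1 k2 : ℕ) (ν : ℤ → ℝ) (hν : ∀ s ≤ (k : ℤ), ν s ≤ μstar)
    (hsum : Summable (failProb ν k)) :
    ∑ t ∈ Finset.Icc (1 : ℤ) ((k : ℤ) + k1 + k2 + 1), aoi (caseI μmin μstar ν k k2) t ≤
      ∑ t ∈ Finset.Icc (1 : ℤ) ((k : ℤ) + k1 + k2 + 1), aoi (caseII μmin μstar ν k k2) t := by
  have bad_nonneg : 0 ≤ ∑ i ∈ Finset.range k2, (1 - μmin) ^ i :=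
    Finset.sum_nonneg fun i _ => pow_nonneg (by linarith) i
  have age_ge : ∑ r ∈ Finset.range (k1 + 1), (1 - μstar) ^ r ≤ aoi ν k :=
    geom_sum_le_aoi hμstar_le hν hsum (k1 + 1)
  rw [← sub_nonneg, sum_aoi_caseII_sub_sum_aoi_caseI hsum]
  exact mul_nonneg (mul_nonneg (sub_nonneg.2 hμ_le) bad_nonneg) (sub_nonneg.2 age_ge)

/-- (Lemma 4, swap lemma.) With `μ_I` and `μ_II` the Case I and Case II
schedules built from integers `k ≥ 0`, `k1 ≥ 0`, `k2 ≥ 1` and a common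
schedule `ν`, and `T = k + k1 + k2 + 1`:
`∑_{t=1}^{T} A_{μ_I}(t) ≤ ∑_{t=1}^{T} A_{μ_II}(t)`. -/
theorem stmt_4 (μmin μstar : ℝ) (hμmin_pos : 0 < μmin) (hμ_le : μmin ≤ μstar)
    (hμstar_le : μstar ≤ 1) (k k1 k2 : ℕ) (hk2 : 1 ≤ k2)
    (ν : ℤ → ℝ) (hν : ∀ s : ℤ, μmin ≤ ν s ∧ ν s ≤ μstar) :
    ∑ t ∈ Finset.Icc (1 : ℤ) ((k : ℤ) + k1 + k2 + 1), aoi (caseI μmin μstar ν k k2) t ≤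
      ∑ t ∈ Finset.Icc (1 : ℤ) ((k : ℤ) + k1 + k2 + 1), aoi (caseII μmin μstar ν k k2) t :=
  stmt_4_general μmin μstar hμ_le hμstar_le k k1 k2 ν (fun s _ => (hν s).2)
    (summable_failProb hμmin_pos fun s _ => ⟨(hν s).1, (hν s).2.trans hμstar_le⟩)
end

section
/- (Equation (8) in the proof of Lemma 4 of the paper.) With μ_I and μ_II the Case I and Case II schedules built from integers k ≥ 0, k1 ≥ 0, k2 ≥ 1 and a common schedule ν, and T = k + k1 + k2 + 1: for every integer m with 0 ≤ m ≤ k1, A_{μ_I}(T−m) − A_{μ_II}(T−m) = (1−μ*)^{k1−m} · μ* · ∑_{j=1}^{k2−1} (1−μ_min)^{j} + (1−μ*)^{k1−m} · ((1−μ_min)^{k2} − (1−μ*)). -/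
/-!
The series is affine in its own past: the first `n` terms of `A_μ(t + n)` only involve the slots
`t + 1, …, t + n`, and the remaining terms sum to `F * A_μ(t)`, where `F` is the probability that
all these slots fail. On a run of `n` slots with success probability `p` this reads
`A_μ(t + n) = ∑_{j < n} (1 - p)^j + (1 - p)^n * A_μ(t)`. Both schedules consist of three such runs
after slot `k`, and they differ only in the order of the first `k2 + 1` slots, so `A_ν(k)` enters
both values with the same coefficient and cancels in the difference.
-/

/-- The probability that the `n` latest slots `t, t - 1, …, t - n + 1` up to time `t` all fail under
the schedule `μ`; this is the `n`-th term of the series `aoi μ t`. Values of `μ` outside `[0, 1]`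
are allowed, in which case it is a formal product. -/
def failureProb (μ : ℤ → ℝ) (t : ℤ) (n : ℕ) : ℝ :=
  ∏ i ∈ Finset.range n, (1 - μ (t - i))

section FailureProb

variable {μ μ' : ℤ → ℝ} {t : ℤ} {n : ℕ}

theorem failureProb_congr (h : ∀ s ≤ t, μ s = μ' s) : failureProb μ t = failureProb μ' t := by
  funext n
  exact Finset.prod_congr rfl fun i _ => by rw [h (t - i) (by lia)]

theorem failureProb_eq_pow {p : ℝ} (h : ∀ s ∈ Set.Ioc (t - n) t, μ s = p) :
    failureProb μ t n = (1 - p) ^ n := by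
  have hfactor : ∀ i ∈ Finset.range n, 1 - μ (t - i) = 1 - p := fun i hi => by
    rw [h (t - i) ⟨by grind, by lia⟩]
  rw [failureProb, Finset.prod_eq_pow_card hfactor, Finset.card_range]

theorem failureProb_add (μ : ℤ → ℝ) (t : ℤ) (m n : ℕ) :
    failureProb μ (t + n) (m + n) = failureProb μ (t + n) n * failureProb μ t m := by
  have hshift (i : ℕ) : t + n - (n + i : ℕ) = t - i := by lia
  simp only [failureProb, add_comm m, Finset.prod_range_add, hshift]

theorem summable_failureProb {r : ℝ} (hr : r < 1) (h : ∀ s ≤ t, |1 - μ s| ≤ r) :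
    Summable (failureProb μ t) := by
  have hr_nonneg : 0 ≤ r := (abs_nonneg _).trans (h t le_rfl)
  refine (summable_geometric_of_lt_one hr_nonneg hr).of_norm_bounded fun n => ?_
  rw [Real.norm_eq_abs, failureProb, Finset.abs_prod]
  calc ∏ i ∈ Finset.range n, |1 - μ (t - i)| ≤ ∏ _i ∈ Finset.range n, r :=
        Finset.prod_le_prod (fun _ _ => abs_nonneg _) fun i _ => h (t - i) (by lia)
    _ = r ^ n := by rw [Finset.prod_const, Finset.card_range]

theorem hasSum_failureProb_add {a : ℝ} (h : HasSum (failureProb μ t) a) (n : ℕ) :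
    HasSum (failureProb μ (t + n))
      (∑ j ∈ Finset.range n, failureProb μ (t + n) j + failureProb μ (t + n) n * a) := by
  refine HasSum.sum_range_add ?_
  simpa only [failureProb_add] using h.mul_left (failureProb μ (t + n) n)

theorem hasSum_failureProb_add_of_const {a p : ℝ} (h : HasSum (failureProb μ t) a)
    (hp : ∀ s ∈ Set.Ioc t (t + n), μ s = p) :
    HasSum (failureProb μ (t + n))
      (∑ j ∈ Finset.range n, (1 - p) ^ j + (1 - p) ^ n * a) := by
  have hpow : ∀ j ≤ n, failureProb μ (t + n) j = (1 - p) ^ j := fun j hj =>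
    failureProb_eq_pow fun s hs => hp s ⟨by grind, hs.2⟩
  convert hasSum_failureProb_add h n using 2
  · exact Finset.sum_congr rfl fun j hj => (hpow j (Finset.mem_range.1 hj).le).symm
  · rw [hpow n le_rfl]

theorem hasSum_failureProb_add_one {a : ℝ} (h : HasSum (failureProb μ t) a) :
    HasSum (failureProb μ (t + 1)) (1 + (1 - μ (t + 1)) * a) := by
  simpa [failureProb] using hasSum_failureProb_add h 1

end FailureProb

section Cases

variable {ν : ℤ → ℝ} {k : ℕ} {a : ℝ}

theorem aoi_caseI (μmin μstar : ℝ) (h : HasSum (failureProb ν k) a) (k2 n : ℕ) :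
    aoi (caseI μmin μstar ν k k2) (k + 1 + k2 + n) =
      ∑ j ∈ Finset.range n, (1 - μstar) ^ j + (1 - μstar) ^ n *
        (∑ j ∈ Finset.range k2, (1 - μmin) ^ j + (1 - μmin) ^ k2 *
          (1 + (1 - μstar) * a)) := by
  rw [← failureProb_congr (μ := caseI μmin μstar ν k k2) fun s hs => by grind [caseI]] at h
  have hslot : caseI μmin μstar ν k k2 (k + 1) = μstar := by grind [caseI]
  have hasSum_slot := hslot ▸ hasSum_failureProb_add_one h
  have hasSum_worst := hasSum_failureProb_add_of_const (n := k2) (p := μmin) hasSum_slot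
    fun s hs => by grind [caseI]
  exact (hasSum_failureProb_add_of_const hasSum_worst fun s hs => by grind [caseI]).tsum_eq

theorem aoi_caseII (μmin μstar : ℝ) (h : HasSum (failureProb ν k) a) (k2 n : ℕ) :
    aoi (caseII μmin μstar ν k k2) (k + k2 + 1 + n) =
      ∑ j ∈ Finset.range n, (1 - μstar) ^ j + (1 - μstar) ^ n *
        (1 + (1 - μstar) *
          (∑ j ∈ Finset.range k2, (1 - μmin) ^ j + (1 - μmin) ^ k2 * a)) := by
  rw [← failureProb_congr (μ := caseII μmin μstar ν k k2) fun s hs => by grind [caseII]] at h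
  have hasSum_worst := hasSum_failureProb_add_of_const (n := k2) (p := μmin) h
    fun s hs => by grind [caseII]
  have hslot : caseII μmin μstar ν k k2 (k + k2 + 1) = μstar := by grind [caseII]
  have hasSum_slot := hslot ▸ hasSum_failureProb_add_one hasSum_worst
  exact (hasSum_failureProb_add_of_const hasSum_slot fun s hs => by grind [caseII]).tsum_eq

end Cases

theorem stmt_5_general (μmin μstar : ℝ) (k k1 k2 : ℕ) (hk2 : 1 ≤ k2) (ν : ℤ → ℝ)
    (hν : Summable (failureProb ν k)) (m : ℕ) (hm : m ≤ k1) :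
    aoi (caseI μmin μstar ν k k2) ((k : ℤ) + k1 + k2 + 1 - m) -
        aoi (caseII μmin μstar ν k k2) ((k : ℤ) + k1 + k2 + 1 - m) =
      (1 - μstar) ^ (k1 - m) * μstar *
          (∑ j ∈ Finset.Icc 1 (k2 - 1), (1 - μmin) ^ j) +
        (1 - μstar) ^ (k1 - m) * ((1 - μmin) ^ k2 - (1 - μstar)) := by
  have hvalueI := aoi_caseI μmin μstar hν.hasSum k2 (k1 - m)
  have hvalueII := aoi_caseII μmin μstar hν.hasSum k2 (k1 - m)
  have htimeI : (k : ℤ) + 1 + k2 + (k1 - m : ℕ) = k + k1 + k2 + 1 - m := by lia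
  have htimeII : (k : ℤ) + k2 + 1 + (k1 - m : ℕ) = k + k1 + k2 + 1 - m := by lia
  rw [htimeI] at hvalueI
  rw [htimeII] at hvalueII
  rw [hvalueI, hvalueII, Finset.sum_range_eq_add_Ico _ hk2,
    ← Finset.Icc_sub_one_right_eq_Ico_of_not_isMin (not_isMin_of_lt hk2)]
  ring

/-- (Equation (8) in the proof of Lemma 4.) With `μ_I`, `μ_II` the Case I and
Case II schedules built from `k ≥ 0`, `k1 ≥ 0`, `k2 ≥ 1` and a common schedule
`ν`, and `T = k + k1 + k2 + 1`: for every `m` with `0 ≤ m ≤ k1`,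
`A_{μ_I}(T−m) − A_{μ_II}(T−m)
  = (1−μ*)^{k1−m} μ* ∑_{j=1}^{k2−1} (1−μ_min)^j
    + (1−μ*)^{k1−m} ((1−μ_min)^{k2} − (1−μ*))`. -/
theorem stmt_5 (μmin μstar : ℝ) (hμmin_pos : 0 < μmin) (hμ_le : μmin ≤ μstar)
    (hμstar_le : μstar ≤ 1) (k k1 k2 : ℕ) (hk2 : 1 ≤ k2)
    (ν : ℤ → ℝ) (hν : ∀ s : ℤ, μmin ≤ ν s ∧ ν s ≤ μstar)
    (m : ℕ) (hm : m ≤ k1) :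
    aoi (caseI μmin μstar ν k k2) ((k : ℤ) + k1 + k2 + 1 - m) -
        aoi (caseII μmin μstar ν k k2) ((k : ℤ) + k1 + k2 + 1 - m) =
      (1 - μstar) ^ (k1 - m) * μstar *
          (∑ j ∈ Finset.Icc 1 (k2 - 1), (1 - μmin) ^ j) +
        (1 - μstar) ^ (k1 - m) * ((1 - μmin) ^ k2 - (1 - μstar)) := by
  have hsum : Summable (failureProb ν k) := summable_failureProb (r := 1 - μmin) (by linarith)
    fun s _ => abs_le.2 ⟨by linarith [hν s], by linarith [hν s]⟩
  exact stmt_5_general μmin μstar k k1 k2 hk2 ν hsum m hm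
end

section
/- (Equation (16) in the proof of Lemma 6 of the paper, expected AoI under Schedule B.) Let μ_min, μ* ∈ (0,1], let n ∈ ℤ, and let the function μ : ℤ → ℝ satisfy μ(s) = μ_min for all s ≤ n and μ(s) = μ* for all s ≥ n+1. Then for every t ≥ n+1, A_μ(t) = (1 − (1−μ*)^{t−n+1})/μ* + (1−μ*)^{t−n} (1−μ_min)/μ_min. -/
/-!
The age at time `t` exceeds `τ` exactly when the last `τ` updates all fail, so `aoi μ t` is the sum
of these tail probabilities. Splitting the sum at the slot where the schedule switches leaves a
finite geometric sum in `1 - μstar` and the tail `(1 - μstar) ^ (t - n) * aoi μ n`, and before the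
switch the series is a geometric one, so that `aoi μ n = μmin⁻¹`.
-/

/-- The probability that the updates attempted in the `τ` slots `t, t - 1, …, t - τ + 1` all fail,
i.e. that the age at time `t` exceeds `τ`; `aoi μ t` is its sum over `τ`. -/
noncomputable def noSuccessProb (μ : ℤ → ℝ) (t : ℤ) (τ : ℕ) : ℝ :=
  ∏ i ∈ Finset.range τ, (1 - μ (t - (i : ℤ)))

theorem noSuccessProb_add (μ : ℤ → ℝ) (t : ℤ) (m k : ℕ) :
    noSuccessProb μ t (m + k) = noSuccessProb μ t m * noSuccessProb μ (t - m) k := by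
  simp only [noSuccessProb, Finset.prod_range_add, Nat.cast_add, sub_add_eq_sub_sub]

theorem noSuccessProb_eq_pow {μ : ℤ → ℝ} {t : ℤ} {p : ℝ} {τ : ℕ}
    (h : ∀ s, t - τ < s → s ≤ t → μ s = p) : noSuccessProb μ t τ = (1 - p) ^ τ := by
  have factor_eq : ∀ i ∈ Finset.range τ, 1 - μ (t - (i : ℤ)) = 1 - p := fun i hi ↦ by
    have hi : i < τ := Finset.mem_range.mp hi
    rw [h _ (by lia) (by lia)]
  rw [noSuccessProb, Finset.prod_eq_pow_card factor_eq, Finset.card_range]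

theorem aoi_eq_sum_add_mul_aoi_sub {μ : ℤ → ℝ} {t : ℤ} (m : ℕ)
    (h : Summable (noSuccessProb μ (t - m))) :
    aoi μ t =
      ∑ τ ∈ Finset.range m, noSuccessProb μ t τ + noSuccessProb μ t m * aoi μ (t - m) := by
  have shift (k : ℕ) :
      noSuccessProb μ t (k + m) = noSuccessProb μ t m * noSuccessProb μ (t - m) k := by
    rw [add_comm, noSuccessProb_add]
  have summable : Summable (noSuccessProb μ t) :=
    (summable_nat_add_iff m).mp <| by simpa only [shift] using h.mul_left _
  calc
    aoi μ t = ∑ τ ∈ Finset.range m, noSuccessProb μ t τ + ∑' k, noSuccessProb μ t (k + m) :=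
      (summable.sum_add_tsum_nat_add m).symm
    _ = ∑ τ ∈ Finset.range m, noSuccessProb μ t τ + noSuccessProb μ t m * aoi μ (t - m) := by
      simp only [shift, tsum_mul_left]
      rfl

theorem hasSum_noSuccessProb_of_forall_le_eq {μ : ℤ → ℝ} {n : ℤ} {p : ℝ} (hp : |1 - p| < 1)
    (h : ∀ s ≤ n, μ s = p) : HasSum (noSuccessProb μ n) p⁻¹ := by
  have eq_pow : noSuccessProb μ n = fun τ ↦ (1 - p) ^ τ :=
    funext fun _ ↦ noSuccessProb_eq_pow fun s _ hs ↦ h s hs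
  simpa only [eq_pow, sub_sub_cancel] using hasSum_geometric_of_abs_lt_one hp

theorem aoi_eq_inv_of_forall_le_eq {μ : ℤ → ℝ} {n : ℤ} {p : ℝ} (hp : |1 - p| < 1)
    (h : ∀ s ≤ n, μ s = p) : aoi μ n = p⁻¹ :=
  (hasSum_noSuccessProb_of_forall_le_eq hp h).tsum_eq

theorem aoi_add_natCast_of_step {μ : ℤ → ℝ} {n : ℤ} {p q : ℝ} (hp : |1 - p| < 1)
    (hlo : ∀ s ≤ n, μ s = p) (hhi : ∀ s, n + 1 ≤ s → μ s = q) (m : ℕ) :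
    aoi μ (n + m) = ∑ τ ∈ Finset.range m, (1 - q) ^ τ + (1 - q) ^ m * p⁻¹ := by
  have eq_pow {τ : ℕ} (hτ : τ ≤ m) : noSuccessProb μ (n + m) τ = (1 - q) ^ τ :=
    noSuccessProb_eq_pow fun s hs _ ↦ hhi s (by lia)
  have summable : Summable (noSuccessProb μ (n + m - m)) := by
    simpa only [add_sub_cancel_right] using (hasSum_noSuccessProb_of_forall_le_eq hp hlo).summable
  rw [aoi_eq_sum_add_mul_aoi_sub m summable, add_sub_cancel_right,
    aoi_eq_inv_of_forall_le_eq hp hlo, eq_pow le_rfl,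
    Finset.sum_congr rfl fun τ hτ ↦ eq_pow (Finset.mem_range.mp hτ).le]

theorem stmt_9_general {μmin μstar : ℝ} (hμmin : |1 - μmin| < 1) (hμstar : μstar ≠ 0) {n : ℤ}
    {μ : ℤ → ℝ} (hlo : ∀ s ≤ n, μ s = μmin) (hhi : ∀ s, n + 1 ≤ s → μ s = μstar)
    {t : ℤ} (ht : n ≤ t) :
    aoi μ t =
      (1 - (1 - μstar) ^ (t - n + 1).toNat) / μstar +
        (1 - μstar) ^ (t - n).toNat * ((1 - μmin) / μmin) := by
  obtain ⟨m, rfl⟩ := Int.le.dest ht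
  have hμmin_ne : μmin ≠ 0 := by
    rintro rfl
    norm_num at hμmin
  have geom_sum : ∑ τ ∈ Finset.range m, (1 - μstar) ^ τ = (1 - (1 - μstar) ^ m) / μstar := by
    rw [eq_div_iff hμstar, ← geom_sum_mul_neg, sub_sub_cancel]
  have toNat_sub : (n + m - n).toNat = m := by lia
  have toNat_sub_add_one : (n + m - n + 1).toNat = m + 1 := by lia
  rw [aoi_add_natCast_of_step hμmin hlo hhi, geom_sum, toNat_sub, toNat_sub_add_one]
  field_simp
  ring

/-- (Equation (16) in the proof of Lemma 6: expected AoI under Schedule B.)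
Let `μ_min, μ* ∈ (0,1]`, `n ∈ ℤ`, and let `μ : ℤ → ℝ` satisfy `μ(s) = μ_min`
for all `s ≤ n` and `μ(s) = μ*` for all `s ≥ n+1`. Then for every `t ≥ n+1`,
`A_μ(t) = (1 − (1−μ*)^{t−n+1})/μ* + (1−μ*)^{t−n} (1−μ_min)/μ_min`. -/
theorem stmt_9 (μmin μstar : ℝ) (hμmin_pos : 0 < μmin) (hμmin_le : μmin ≤ 1)
    (hμstar_pos : 0 < μstar) (hμstar_le : μstar ≤ 1) (n : ℤ)
    (μ : ℤ → ℝ) (hlo : ∀ s : ℤ, s ≤ n → μ s = μmin)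
    (hhi : ∀ s : ℤ, n + 1 ≤ s → μ s = μstar)
    (t : ℤ) (ht : n + 1 ≤ t) :
    aoi μ t =
      (1 - (1 - μstar) ^ (t - n + 1).toNat) / μstar +
        (1 - μstar) ^ (t - n).toNat * ((1 - μmin) / μmin) :=
  stmt_9_general (abs_lt.mpr ⟨by linarith, by linarith⟩) hμstar_pos.ne' hlo hhi (by lia)
end
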